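/- arXiv:2509.03657 — 2 statements merged into one kernel-verified Lean document; each statement's English description precedes it below -/
import Mathlib

section
/- There is an absolute constant C > 0 such that for every real Z ≥ 2 and every W ∈ (−1/2, 1/2]: |F(W) − ∑_{n ∈ ℤ, |n| ≤ Z} a_n e(nW)| ≤ C·T_Z(W). -/
noncomputable section
open scoped Classical

/-- `e(z) = e^{2πiz}`. -/
def eC (z : ℝ) : ℂ := Complex.exp (2 * Real.pi * Complex.I * (z : ℂ))

/-- The distance from `X` to the nearest integer. -/
def distNearInt (X : ℝ) : ℝ := |X - round X|

/-- `F(W) = e(τW)` on `(η₁/2, η₂/2]` and `0` otherwise. -/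
def FF (η₁ η₂ τ W : ℝ) : ℂ := if η₁ / 2 < W ∧ W ≤ η₂ / 2 then eC (τ * W) else 0

/-- The Fourier coefficient `a_n = ∫_{η₁/2}^{η₂/2} e((τ−n)z) dz`. -/
def aCoeff (η₁ η₂ τ : ℝ) (n : ℤ) : ℂ := ∫ z in (η₁ / 2)..(η₂ / 2), eC ((τ - n) * z)

/-- `T_Z(W) = min { log Z, 1/(Z‖W−η₁/2‖) + 1/(Z‖W−η₂/2‖) }`, interpreted as `log Z`
when one of the distances vanishes. -/
def TZ (η₁ η₂ Z W : ℝ) : ℝ :=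
  if distNearInt (W - η₁ / 2) = 0 ∨ distNearInt (W - η₂ / 2) = 0 then Real.log Z
  else min (Real.log Z)
    (1 / (Z * distNearInt (W - η₁ / 2)) + 1 / (Z * distNearInt (W - η₂ / 2)))

/-!
The partial sums of the Fourier series of `F` are differences of integrals
`∫₀ᵛ e(-τy) D_N(y) dy` of the twisted Dirichlet kernel, taken at `v = W - η₁/2` and `v = W - η₂/2`.
For `0 < v ≤ 1/2` such an integral misses its limit `1/2 = ∫₀^{1/2} D_N` by
`∫₀^{1/2} (1 - e(-τy)) D_N(y) dy + ∫ᵥ^{1/2} e(-τy) D_N(y) dy`. Since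
`sin(πy) D_N(y) = sin((2N+1)πy)`, both integrals are oscillatory with the monotone amplitudes
`sin(πτy)/sin(πy)` and `1/sin(πy)`, and one integration by parts bounds them by `O(1/N)` and
`O(1/(Nv))`. The remaining `v` are reached through the symmetries `y ↦ -y` and `y ↦ 1 - y` of `D_N`.
The resulting error `O(∑ 1/(1 + Z‖W - ηᵢ/2‖))` is even bounded, uniformly in `Z`.
-/

open Filter Real Topology intervalIntegral

section Exponential

theorem eC_eq_fourierChar (x : ℝ) : eC x = Real.fourierChar x := by
  rw [Real.fourierChar_apply, eC]
  push_cast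
  ring_nf

theorem eC_add (x y : ℝ) : eC (x + y) = eC x * eC y := by
  simp only [eC_eq_fourierChar, AddChar.map_add_eq_mul, Circle.coe_mul]

theorem norm_eC (x : ℝ) : ‖eC x‖ = 1 := by
  rw [eC_eq_fourierChar, Circle.norm_coe]

theorem eC_zero : eC 0 = 1 := by simp [eC]

theorem eC_intCast (n : ℤ) : eC n = 1 := by
  rw [eC, Complex.exp_eq_one_iff]
  exact ⟨n, by push_cast; ring⟩

@[fun_prop]
theorem continuous_eC : Continuous eC := by
  unfold eC
  fun_prop

theorem eC_eq_cos_add_sin (x : ℝ) :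
    eC x = cos (2 * π * x) + sin (2 * π * x) * Complex.I := by
  rw [Complex.ofReal_cos, Complex.ofReal_sin, ← Complex.exp_mul_I, eC]
  push_cast
  ring_nf

theorem eC_add_eC_neg (x : ℝ) : eC x + eC (-x) = 2 * cos (2 * π * x) := by
  rw [eC_eq_cos_add_sin, eC_eq_cos_add_sin, mul_neg, Real.cos_neg, Real.sin_neg]
  push_cast
  ring

theorem eC_sub_eC_neg (x : ℝ) :
    eC x - eC (-x) = 2 * Complex.I * sin (2 * π * x) := by
  rw [eC_eq_cos_add_sin, eC_eq_cos_add_sin, mul_neg, Real.cos_neg, Real.sin_neg]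
  push_cast
  ring

theorem two_mul_I_mul_eC_mul_sin (ν σ x : ℝ) :
    2 * Complex.I * (eC (-σ * x) * sin (2 * π * (ν * x))) =
      eC ((ν - σ) * x) - eC ((-ν - σ) * x) := by
  rw [mul_left_comm, ← eC_sub_eC_neg, mul_sub, ← eC_add, ← eC_add]
  ring_nf

theorem one_sub_eC_neg (x : ℝ) :
    1 - eC (-x) = 2 * Complex.I * sin (π * x) * eC (-(x / 2)) := by
  have h := eC_sub_eC_neg (x / 2)
  rw [show 2 * π * (x / 2) = π * x by ring] at h
  rw [← h, sub_mul, ← eC_add, ← eC_add, add_neg_cancel, eC_zero]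
  ring_nf

theorem hasDerivAt_eC_mul_div {c : ℝ} (hc : c ≠ 0) (x : ℝ) :
    HasDerivAt (fun y : ℝ => eC (c * y) / (2 * π * Complex.I * c)) (eC (c * x)) x := by
  have h := (Real.hasDerivAt_fourierChar (c * x)).scomp x ((hasDerivAt_id x).const_mul c)
  simp only [Function.comp_def, ← eC_eq_fourierChar, mul_one, Complex.real_smul] at h
  have hc' : (2 * π * Complex.I * c : ℂ) ≠ 0 := by simp [Real.pi_ne_zero, hc]
  convert! h.div_const (2 * π * Complex.I * c) using 1
  rw [eq_div_iff hc']
  ring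

theorem integral_eC_mul {c : ℝ} (hc : c ≠ 0) (a b : ℝ) :
    ∫ y in a..b, eC (c * y) = (eC (c * b) - eC (c * a)) / (2 * π * Complex.I * c) := by
  rw [integral_eq_sub_of_hasDerivAt (fun y _ => hasDerivAt_eC_mul_div hc y)
    (Continuous.intervalIntegrable (by fun_prop) _ _), sub_div]

theorem integral_eC_intCast_mul (n : ℤ) :
    ∫ y in (-(1 / 2) : ℝ)..(1 / 2), eC (n * y) = if n = 0 then 1 else 0 := by
  split_ifs with hn
  · norm_num [hn, eC_zero]
  · have hperiod : eC (n * (1 / 2)) = eC (n * -(1 / 2)) := by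
      rw [← mul_one (eC (n * -(1 / 2))), ← eC_intCast n, ← eC_add]
      ring_nf
    rw [integral_eC_mul (Int.cast_ne_zero.mpr hn), hperiod, sub_self, zero_div]

end Exponential

section MonotoneAmplitude

variable {f f' : ℝ → ℝ} {a b : ℝ}

theorem norm_integral_ofReal_mul_eC_le {c : ℝ} (hab : a ≤ b) (hc : c ≠ 0)
    (hf : ∀ y ∈ Set.Icc a b, HasDerivAt f (f' y) y) (hf' : ContinuousOn f' (Set.Icc a b))
    (hf'0 : ∀ y ∈ Set.Icc a b, 0 ≤ f' y) :
    ‖∫ y in a..b, f y * eC (c * y)‖ ≤ (|f b| + |f a| + (f b - f a)) / (2 * π * |c|) := by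
  rw [← Set.uIcc_of_le hab] at hf hf'
  have hint : IntervalIntegrable f' MeasureTheory.volume a b := hf'.intervalIntegrable
  have hnorm (y : ℝ) :
      ‖eC (c * y) / (2 * π * Complex.I * c)‖ = (2 * π * |c|)⁻¹ := by
    simp [norm_eC, abs_of_pos Real.pi_pos]
  have hparts := integral_mul_deriv_eq_deriv_mul (fun y hy => (hf y hy).ofReal_comp)
    (fun y _ => hasDerivAt_eC_mul_div hc y)
    (Complex.continuous_ofReal.comp_continuousOn hf').intervalIntegrable
    (Continuous.intervalIntegrable (by fun_prop) _ _)
  have hderiv : ‖∫ y in a..b, f' y * (eC (c * y) / (2 * π * Complex.I * c))‖ ≤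
      (f b - f a) * (2 * π * |c|)⁻¹ := by
    rw [← integral_eq_sub_of_hasDerivAt hf hint, ← integral_mul_const]
    refine norm_integral_le_of_norm_le hab (.of_forall fun y hy => ?_) (hint.mul_const _)
    rw [norm_mul, hnorm, Complex.norm_real,
      Real.norm_of_nonneg (hf'0 y (Set.Ioc_subset_Icc_self hy))]
  rw [hparts]
  calc _ ≤ |f b| * (2 * π * |c|)⁻¹ + |f a| * (2 * π * |c|)⁻¹ +
        (f b - f a) * (2 * π * |c|)⁻¹ := by
        refine (norm_sub_le _ _).trans (add_le_add ((norm_sub_le _ _).trans ?_) hderiv)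
        simp only [norm_mul, hnorm, Complex.norm_real, Real.norm_eq_abs, le_refl]
    _ = _ := by ring

theorem norm_integral_ofReal_mul_eC_mul_sin_le {M σ : ℝ} {N : ℕ} (hab : a ≤ b) (hN : N ≠ 0)
    (hσ : |σ| ≤ 1 / 2)
    (hf : ∀ y ∈ Set.Icc a b, HasDerivAt f (f' y) y) (hf' : ContinuousOn f' (Set.Icc a b))
    (hf'0 : ∀ y ∈ Set.Icc a b, 0 ≤ f' y) (ha : |f a| ≤ M) (hb : |f b| ≤ M) :
    ‖∫ y in a..b, f y * eC (-σ * y) * sin (2 * π * ((N + 1 / 2) * y))‖ ≤ M / N := by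
  have hN0 : (0 : ℝ) < N := by positivity
  have hσ' := abs_le.mp hσ
  have hM : 0 ≤ M := (abs_nonneg _).trans ha
  have hfreq {c : ℝ} (hc : N ≤ |c|) : ‖∫ y in a..b, f y * eC (c * y)‖ ≤ M / N := by
    refine (norm_integral_ofReal_mul_eC_le hab (abs_pos.mp (hN0.trans_le hc)) hf hf' hf'0).trans ?_
    have hnum : |f b| + |f a| + (f b - f a) ≤ 6 * M := by
      linarith [le_abs_self (f b), neg_abs_le (f a)]
    calc _ ≤ 6 * M / (6 * N) := by
          refine div_le_div₀ (by positivity) hnum (by positivity) ?_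
          nlinarith [Real.pi_gt_three]
      _ = M / N := by field_simp
  have hcont (c : ℝ) :
      IntervalIntegrable (fun y => (f y : ℂ) * eC (c * y)) MeasureTheory.volume a b := by
    refine ContinuousOn.intervalIntegrable ?_
    rw [Set.uIcc_of_le hab]
    refine ContinuousOn.mul (fun y hy => ?_) (by fun_prop)
    exact (hf y hy).ofReal_comp.continuousAt.continuousWithinAt
  -- Folding the phase into the frequency leaves `±(N + 1/2) - σ`, of absolute value at least `N`.
  have hsplit : 2 * Complex.I *
      ∫ y in a..b, f y * eC (-σ * y) * sin (2 * π * ((N + 1 / 2) * y)) =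
      (∫ y in a..b, f y * eC ((N + 1 / 2 - σ) * y)) -
        ∫ y in a..b, f y * eC ((-(N + 1 / 2) - σ) * y) := by
    rw [← integral_const_mul, ← integral_sub (hcont _) (hcont _)]
    refine integral_congr fun y _ => ?_
    linear_combination (f y : ℂ) * two_mul_I_mul_eC_mul_sin (N + 1 / 2) σ y
  have h := congrArg norm hsplit
  rw [norm_mul, norm_mul, Complex.norm_I, Complex.norm_ofNat, mul_one] at h
  have hpos := hfreq (c := N + 1 / 2 - σ) ((le_abs_self _).trans' (by linarith))
  have hneg := hfreq (c := -(N + 1 / 2) - σ) ((neg_le_abs _).trans' (by linarith))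
  linarith [norm_sub_le (∫ y in a..b, f y * eC ((N + 1 / 2 - σ) * y))
    (∫ y in a..b, f y * eC ((-(N + 1 / 2) - σ) * y))]

end MonotoneAmplitude

section SineRatio

theorem sin_pi_mul_pos {y : ℝ} (h0 : 0 < y) (h1 : y < 1) : 0 < sin (π * y) :=
  Real.sin_pos_of_pos_of_lt_pi (by positivity) (by nlinarith [Real.pi_pos])

theorem sin_mul_mul_cos_le {τ x : ℝ} (hτ0 : 0 ≤ τ) (hτ1 : τ ≤ 1) (hx0 : 0 ≤ x)
    (hx : x ≤ π / 2) :
    sin (τ * x) * cos x ≤ τ * (cos (τ * x) * sin x) := by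
  -- `sin` lies above its chord over `[0, (1 + τ) x]` at the point `(1 - τ) x`.
  have hconc := strictConcaveOn_sin_Icc.concaveOn.2 (⟨le_rfl, Real.pi_pos.le⟩ : 0 ∈ Set.Icc 0 π)
    (⟨by positivity, by nlinarith⟩ : (1 + τ) * x ∈ Set.Icc 0 π)
    (by positivity : 0 ≤ 2 * τ / (1 + τ))
    (div_nonneg (by linarith) (by linarith) : 0 ≤ (1 - τ) / (1 + τ)) (by field_simp; ring)
  simp only [smul_eq_mul, Real.sin_zero, mul_zero, zero_add] at hconc
  rw [show (1 - τ) / (1 + τ) * ((1 + τ) * x) = x - τ * x by field_simp, div_mul_eq_mul_div,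
    div_le_iff₀ (by linarith), show (1 + τ) * x = x + τ * x by ring, Real.sin_add,
    Real.sin_sub] at hconc
  linarith

theorem hasDerivAt_sin_mul_div_sin (τ : ℝ) {x : ℝ} (hx : sin x ≠ 0) :
    HasDerivAt (fun x => sin (τ * x) / sin x)
      ((τ * (cos (τ * x) * sin x) - sin (τ * x) * cos x) / sin x ^ 2) x := by
  convert! ((hasDerivAt_id x).const_mul τ).sin.div (Real.hasDerivAt_sin x) hx using 1
  simp only [id_eq, mul_one]
  ring

theorem abs_sin_mul_div_sin_le_one {τ x : ℝ} (hτ0 : 0 ≤ τ) (hτ1 : τ ≤ 1) (hx0 : 0 ≤ x)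
    (hx : x ≤ π / 2) : |sin (τ * x) / sin x| ≤ 1 := by
  have hle : τ * x ≤ x := mul_le_of_le_one_left hx0 hτ1
  have hτx : 0 ≤ sin (τ * x) :=
    Real.sin_nonneg_of_nonneg_of_le_pi (by positivity) (by linarith)
  have hmono : sin (τ * x) ≤ sin x :=
    Real.sin_le_sin_of_le_of_le_pi_div_two (by nlinarith) hx hle
  rw [abs_of_nonneg (div_nonneg hτx (hτx.trans hmono))]
  exact div_le_one_of_le₀ hmono (hτx.trans hmono)

end SineRatio

section DirichletKernel

/-- The Dirichlet kernel `∑_{|n| ≤ N} e(ny)`, complex-valued so that it can be compared termwise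
with exponential sums. -/
def dirichletKernel (N : ℕ) (y : ℝ) : ℂ := ∑ n ∈ Finset.Icc (-(N : ℤ)) N, eC (n * y)

variable (N : ℕ)

@[fun_prop]
theorem continuous_dirichletKernel : Continuous (dirichletKernel N) := by
  unfold dirichletKernel
  fun_prop

theorem dirichletKernel_neg (y : ℝ) : dirichletKernel N (-y) = dirichletKernel N y := by
  refine Finset.sum_equiv (Equiv.neg ℤ) (fun n => ?_) fun n _ => ?_
  · simp only [Finset.mem_Icc, Equiv.neg_apply]
    lia
  · simp

theorem dirichletKernel_one_sub (y : ℝ) : dirichletKernel N (1 - y) = dirichletKernel N y := by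
  rw [← dirichletKernel_neg]
  refine Finset.sum_congr rfl fun n _ => ?_
  rw [show (n : ℝ) * -(1 - y) = n * y + (-n : ℤ) by push_cast; ring, eC_add, eC_intCast, mul_one]

theorem norm_dirichletKernel_le (y : ℝ) : ‖dirichletKernel N y‖ ≤ 2 * N + 1 := by
  refine (norm_sum_le _ _).trans_eq ?_
  simp only [norm_eC, Finset.sum_const, Int.card_Icc, nsmul_eq_mul, mul_one]
  rw [show ((N : ℤ) + 1 - -N).toNat = 2 * N + 1 by lia]
  push_cast
  rfl

theorem dirichletKernel_succ (y : ℝ) :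
    dirichletKernel (N + 1) y = dirichletKernel N y + 2 * cos (2 * π * ((N + 1) * y)) := by
  unfold dirichletKernel
  rw [Nat.cast_add, Nat.cast_one, Finset.Icc_succ_succ, Finset.sum_union (by simp),
    Finset.sum_pair (by lia), ← eC_add_eC_neg, add_comm (eC _), ← neg_mul]
  push_cast
  rfl

theorem sin_mul_dirichletKernel (y : ℝ) :
    sin (π * y) * dirichletKernel N y =
      sin (2 * π * ((N + 1 / 2) * y)) := by
  induction N with
  | zero => simp [dirichletKernel, eC_zero]; ring_nf
  | succ N ih =>
    have hsin : sin (2 * π * (((N + 1 : ℕ) + 1 / 2) * y)) =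
        sin (2 * π * ((N + 1 / 2) * y)) +
          2 * sin (π * y) * cos (2 * π * ((N + 1) * y)) := by
      rw [show 2 * π * (((N + 1 : ℕ) + 1 / 2) * y) =
          2 * π * ((N + 1) * y) + π * y by push_cast; ring,
        show 2 * π * ((N + 1 / 2) * y) = 2 * π * ((N + 1) * y) - π * y by ring,
        Real.sin_add, Real.sin_sub]
      ring
    rw [dirichletKernel_succ, mul_add, ih, hsin]
    push_cast
    ring

theorem integral_dirichletKernel_half : ∫ y in (0 : ℝ)..(1 / 2), dirichletKernel N y = 1 / 2 := by
  have hperiod : ∫ y in (-(1 / 2) : ℝ)..(1 / 2), dirichletKernel N y = 1 := by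
    unfold dirichletKernel
    rw [integral_finsetSum fun n _ => Continuous.intervalIntegrable (by fun_prop) _ _]
    simp only [integral_eC_intCast_mul, Finset.sum_ite_eq', Finset.mem_Icc]
    simp
  have hhalf : ∫ y in (-(1 / 2) : ℝ)..0, dirichletKernel N y =
      ∫ y in (0 : ℝ)..(1 / 2), dirichletKernel N y := by
    rw [← neg_zero, ← integral_comp_neg]
    simp only [dirichletKernel_neg, neg_zero]
  rw [← integral_add_adjacent_intervals (b := 0) (Continuous.intervalIntegrable (by fun_prop) _ _)
    (Continuous.intervalIntegrable (by fun_prop) _ _), hhalf] at hperiod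
  linear_combination hperiod / 2

end DirichletKernel

section DirichletIntegral

theorem norm_integral_eC_mul_dirichletKernel_le {τ v : ℝ} {N : ℕ} (hτ : |τ| ≤ 1 / 2) (hN : N ≠ 0)
    (hv0 : 0 < v) (hv : v ≤ 1 / 2) :
    ‖∫ y in v..(1 / 2), eC (-τ * y) * dirichletKernel N y‖ ≤ 1 / (2 * v) / N := by
  have hsin {y : ℝ} (hy : y ∈ Set.Icc v (1 / 2)) : 0 < sin (π * y) :=
    sin_pi_mul_pos (hv0.trans_le hy.1) (by linarith [hy.2])
  have hderiv (y : ℝ) (hy : y ∈ Set.Icc v (1 / 2)) :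
      HasDerivAt (fun y => -(sin (π * y))⁻¹)
        (cos (π * y) * π / sin (π * y) ^ 2) y := by
    convert! (((hasDerivAt_id y).const_mul π).sin.inv (hsin hy).ne').neg using 1
    simp [neg_div]
  have hcont : ContinuousOn (fun y => cos (π * y) * π / sin (π * y) ^ 2)
      (Set.Icc v (1 / 2)) :=
    ContinuousOn.div (by fun_prop) (by fun_prop) fun y hy => pow_ne_zero 2 (hsin hy).ne'
  have hderiv0 (y : ℝ) (hy : y ∈ Set.Icc v (1 / 2)) :
      0 ≤ cos (π * y) * π / sin (π * y) ^ 2 := by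
    have := Real.cos_nonneg_of_neg_pi_div_two_le_of_le (x := π * y)
      (by nlinarith [Real.pi_pos, hy.1]) (by nlinarith [Real.pi_pos, hy.2])
    positivity
  have hbound (y : ℝ) (hy : y ∈ Set.Icc v (1 / 2)) :
      |-(sin (π * y))⁻¹| ≤ 1 / (2 * v) := by
    have := Real.mul_le_sin (x := π * y) (by nlinarith [Real.pi_pos, hy.1])
      (by nlinarith [Real.pi_pos, hy.2])
    rw [← mul_assoc, div_mul_cancel₀ _ Real.pi_ne_zero] at this
    rw [abs_neg, abs_of_pos (inv_pos.mpr (hsin hy)), ← one_div]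
    exact one_div_le_one_div_of_le (by positivity) (by linarith [hy.1])
  convert norm_integral_ofReal_mul_eC_mul_sin_le hv hN hτ hderiv hcont hderiv0
    (hbound v ⟨le_rfl, hv⟩) (hbound _ ⟨hv, le_rfl⟩) using 1
  rw [← norm_neg, ← integral_neg]
  refine congrArg norm (integral_congr fun y hy => ?_)
  rw [Set.uIcc_of_le hv] at hy
  have hne : (sin (π * y) : ℂ) ≠ 0 := Complex.ofReal_ne_zero.mpr (hsin hy).ne'
  rw [← sin_mul_dirichletKernel, Complex.ofReal_neg, Complex.ofReal_inv]
  linear_combination eC (-τ * y) * dirichletKernel N y * inv_mul_cancel₀ hne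

theorem norm_integral_sin_mul_eC_mul_dirichletKernel_le_of_pos {τ σ ε : ℝ} {N : ℕ}
    (hτ0 : 0 ≤ τ) (hτ1 : τ ≤ 1) (hσ : |σ| ≤ 1 / 2) (hN : N ≠ 0) (hε0 : 0 < ε) (hε : ε ≤ 1 / 2) :
    ‖∫ y in ε..(1 / 2), sin (τ * (π * y)) * eC (-σ * y) * dirichletKernel N y‖ ≤
      1 / N := by
  have hsin {y : ℝ} (hy : y ∈ Set.Icc ε (1 / 2)) : sin (π * y) ≠ 0 :=
    (sin_pi_mul_pos (hε0.trans_le hy.1) (by linarith [hy.2])).ne'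
  have hpi {y : ℝ} (hy : y ∈ Set.Icc ε (1 / 2)) : 0 ≤ π * y ∧ π * y ≤ π / 2 :=
    ⟨by nlinarith [Real.pi_pos, hy.1], by nlinarith [Real.pi_pos, hy.2]⟩
  have hbound {y : ℝ} (hy : y ∈ Set.Icc ε (1 / 2)) :
      |sin (τ * (π * y)) / sin (π * y)| ≤ 1 :=
    abs_sin_mul_div_sin_le_one hτ0 hτ1 (hpi hy).1 (hpi hy).2
  convert norm_integral_ofReal_mul_eC_mul_sin_le hε hN hσ
    (fun y hy => (hasDerivAt_sin_mul_div_sin τ (hsin hy)).comp y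
      ((hasDerivAt_id y).const_mul π))
    (ContinuousOn.mul (ContinuousOn.div (by fun_prop) (by fun_prop)
      fun y hy => pow_ne_zero 2 (hsin hy)) continuousOn_const)
    (fun y hy => mul_nonneg (div_nonneg
      (sub_nonneg.mpr (sin_mul_mul_cos_le hτ0 hτ1 (hpi hy).1 (hpi hy).2)) (sq_nonneg _))
      (by positivity))
    (hbound ⟨le_rfl, hε⟩) (hbound ⟨hε, le_rfl⟩) using 1
  refine congrArg norm (integral_congr fun y hy => ?_)
  rw [Set.uIcc_of_le hε] at hy
  have hne : (sin (π * y) : ℂ) ≠ 0 := Complex.ofReal_ne_zero.mpr (hsin hy)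
  simp only [← sin_mul_dirichletKernel, Complex.ofReal_div, Function.comp_apply]
  field_simp

theorem norm_integral_sin_mul_eC_mul_dirichletKernel_le {τ σ : ℝ} {N : ℕ} (hτ : |τ| ≤ 1)
    (hσ : |σ| ≤ 1 / 2) (hN : N ≠ 0) :
    ‖∫ y in 0..(1 / 2), sin (τ * (π * y)) * eC (-σ * y) * dirichletKernel N y‖ ≤
      1 / N := by
  wlog hτ0 : 0 ≤ τ generalizing τ
  · have h := this (τ := -τ) (by rwa [abs_neg]) (by linarith)
    rw [← norm_neg, ← integral_neg] at h
    refine h.trans_eq' (congrArg norm (integral_congr fun y _ => ?_))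
    rw [neg_mul τ, Real.sin_neg]
    push_cast
    ring
  have hlim : Tendsto (fun ε : ℝ =>
      ∫ y in ε..(1 / 2), sin (τ * (π * y)) * eC (-σ * y) * dirichletKernel N y)
      (𝓝[>] 0)
      (𝓝 (∫ y in 0..(1 / 2), sin (τ * (π * y)) * eC (-σ * y) * dirichletKernel N y)) := by
    simp only [integral_symm (1 / 2) _]
    exact ((continuous_primitive (fun _ _ => Continuous.intervalIntegrable (by fun_prop) _ _)
      (1 / 2)).neg.tendsto 0).mono_left nhdsWithin_le_nhds
  refine le_of_tendsto hlim.norm ?_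
  filter_upwards [Ioc_mem_nhdsGT (show (0 : ℝ) < 1 / 2 by norm_num)] with ε hε
  exact norm_integral_sin_mul_eC_mul_dirichletKernel_le_of_pos hτ0 (abs_le.mp hτ).2 hσ hN hε.1 hε.2

theorem norm_integral_one_sub_eC_mul_dirichletKernel_le {τ : ℝ} {N : ℕ} (hτ : |τ| ≤ 1)
    (hN : N ≠ 0) : ‖∫ y in 0..(1 / 2), (1 - eC (-τ * y)) * dirichletKernel N y‖ ≤ 2 / N := by
  have hamp (y : ℝ) : (1 - eC (-τ * y)) * dirichletKernel N y = 2 * Complex.I *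
      (sin (τ * (π * y)) * eC (-(τ / 2) * y) * dirichletKernel N y) := by
    rw [neg_mul, one_sub_eC_neg, mul_left_comm π τ y,
      show -(τ * y / 2) = -(τ / 2) * y by ring]
    ring
  have h := norm_integral_sin_mul_eC_mul_dirichletKernel_le (σ := τ / 2) hτ
    (by rw [abs_div, abs_two]; linarith) hN
  simp only [hamp, integral_const_mul]
  rw [norm_mul, norm_mul, Complex.norm_I, Complex.norm_ofNat, mul_one]
  calc _ ≤ 2 * (1 / (N : ℝ)) := by gcongr
    _ = 2 / N := by ring

/-- The integral `∫₀ᵛ e(-τy) D_N(y) dy` of the twisted Dirichlet kernel: up to the factor `e(τW)`,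
the partial Fourier sum of `F` at `W` is a difference of two of its values. -/
def dirichletIntegral (N : ℕ) (τ v : ℝ) : ℂ := ∫ y in 0..v, eC (-τ * y) * dirichletKernel N y

theorem dirichletIntegral_sub (N : ℕ) (τ u v : ℝ) :
    dirichletIntegral N τ v - dirichletIntegral N τ u =
      ∫ y in u..v, eC (-τ * y) * dirichletKernel N y :=
  integral_interval_sub_left (Continuous.intervalIntegrable (by fun_prop) _ _)
    (Continuous.intervalIntegrable (by fun_prop) _ _)

theorem dirichletIntegral_neg (N : ℕ) (τ v : ℝ) :
    dirichletIntegral N τ (-v) = -dirichletIntegral N (-τ) v := by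
  unfold dirichletIntegral
  rw [integral_symm, ← neg_zero, ← integral_comp_neg, neg_zero]
  simp only [dirichletKernel_neg, mul_neg, neg_mul, neg_neg]

theorem dirichletIntegral_one_sub (N : ℕ) (τ v : ℝ) :
    dirichletIntegral N τ (1 - v) = dirichletIntegral N τ (1 / 2) +
      eC (-τ) * (dirichletIntegral N (-τ) (1 / 2) - dirichletIntegral N (-τ) v) := by
  rw [← sub_eq_iff_eq_add', dirichletIntegral_sub, dirichletIntegral_sub, ← integral_const_mul,
    show (1 / 2 : ℝ) = 1 - 1 / 2 by norm_num, ← integral_comp_sub_left]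
  norm_num only
  refine integral_congr fun y _ => ?_
  simp only [dirichletKernel_one_sub, ← mul_assoc, ← eC_add]
  ring_nf

theorem norm_half_sub_dirichletIntegral_le_div {τ v : ℝ} {N : ℕ} (hτ : |τ| ≤ 1 / 2) (hN : N ≠ 0)
    (hv0 : 0 < v) (hv : v ≤ 1 / 2) :
    ‖1 / 2 - dirichletIntegral N τ v‖ ≤ 3 / (2 * (N * v)) := by
  have hN0 : (0 : ℝ) < N := by positivity
  have hsplit : 1 / 2 - dirichletIntegral N τ v =
      (∫ y in 0..(1 / 2), (1 - eC (-τ * y)) * dirichletKernel N y) +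
        ∫ y in v..(1 / 2), eC (-τ * y) * dirichletKernel N y := by
    simp_rw [sub_mul, one_mul]
    rw [← dirichletIntegral_sub, integral_sub (Continuous.intervalIntegrable (by fun_prop) _ _)
      (Continuous.intervalIntegrable (by fun_prop) _ _), integral_dirichletKernel_half,
      ← dirichletIntegral, sub_add_sub_cancel]
  rw [hsplit]
  calc _ ≤ 2 / (N : ℝ) + 1 / (2 * v) / N :=
        (norm_add_le _ _).trans (add_le_add
          (norm_integral_one_sub_eC_mul_dirichletKernel_le (by linarith) hN)
          (norm_integral_eC_mul_dirichletKernel_le hτ hN hv0 hv))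
    _ ≤ _ := by
        field_simp
        linarith

theorem norm_half_sub_dirichletIntegral_le_of_le_half {τ v : ℝ} (N : ℕ) (hτ : |τ| ≤ 1 / 2)
    (hv0 : 0 ≤ v) (hv : v ≤ 1 / 2) :
    ‖1 / 2 - dirichletIntegral N τ v‖ ≤ 6 / (1 + N * v) := by
  rcases le_total (N * v) 1 with hNv | hNv
  · have htriv : ‖dirichletIntegral N τ v‖ ≤ (2 * N + 1) * |v - 0| :=
      norm_integral_le_of_norm_le_const fun y _ => by
        rw [norm_mul, norm_eC, one_mul]
        exact norm_dirichletKernel_le N y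
    rw [sub_zero, abs_of_nonneg hv0] at htriv
    have hnorm := norm_sub_le (1 / 2 : ℂ) (dirichletIntegral N τ v)
    rw [norm_div, norm_one, Complex.norm_ofNat] at hnorm
    have hthree : ‖1 / 2 - dirichletIntegral N τ v‖ ≤ 3 := by linarith
    rw [le_div_iff₀ (by positivity)]
    calc _ ≤ 3 * (1 + N * v) := by gcongr
      _ ≤ 6 := by linarith
  · have hN : N ≠ 0 := by rintro rfl; norm_num at hNv
    have hv1 : 0 < v := hv0.lt_of_ne (by rintro rfl; norm_num at hNv)
    refine (norm_half_sub_dirichletIntegral_le_div hτ hN hv1 hv).trans ?_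
    rw [div_le_div_iff₀ (by positivity) (by positivity)]
    linarith

theorem norm_half_sub_dirichletIntegral_le {τ v d : ℝ} (N : ℕ) (hτ : |τ| ≤ 1 / 2) (hd : 0 ≤ d)
    (hv0 : d ≤ v) (hv1 : d ≤ 1 - v) :
    ‖1 / 2 - dirichletIntegral N τ v‖ ≤ 18 / (1 + N * d) := by
  have hhalf {σ u : ℝ} (hσ : |σ| ≤ 1 / 2) (hu : d ≤ u) (hu' : u ≤ 1 / 2) :
      ‖1 / 2 - dirichletIntegral N σ u‖ ≤ 6 / (1 + N * d) :=
    (norm_half_sub_dirichletIntegral_le_of_le_half N hσ (hd.trans hu) hu').trans (by gcongr)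
  have h18 : 18 / (1 + N * d) = 3 * (6 / (1 + N * d)) := by ring
  have hpos : 0 ≤ 6 / (1 + N * d) := by positivity
  rw [h18]
  rcases le_total v (1 / 2) with hv | hv
  · linarith [hhalf hτ hv0 hv]
  · have hτ' : |-τ| ≤ 1 / 2 := by rwa [abs_neg]
    have hreflect : 1 / 2 - dirichletIntegral N τ v = (1 / 2 - dirichletIntegral N τ (1 / 2)) +
        eC (-τ) * ((1 / 2 - dirichletIntegral N (-τ) (1 / 2)) -
          (1 / 2 - dirichletIntegral N (-τ) (1 - v))) := by
      have h := dirichletIntegral_one_sub N τ (1 - v)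
      rw [sub_sub_cancel] at h
      rw [h]
      ring
    rw [hreflect]
    refine (norm_add_le _ _).trans ?_
    rw [norm_mul, norm_eC, one_mul]
    linarith [norm_sub_le (1 / 2 - dirichletIntegral N (-τ) (1 / 2))
      (1 / 2 - dirichletIntegral N (-τ) (1 - v)), hhalf hτ (by linarith) le_rfl,
      hhalf hτ' (by linarith) le_rfl, hhalf hτ' hv1 (by linarith)]

end DirichletIntegral

section PartialSum

/-- The sign of `v` divided by `2`, the jump profile to which the integrals `∫₀ᵛ e(-τy) D_N(y) dy`
converge. The value `-1/2` at `0` matches the half-open interval in the definition of `F`. -/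
def halfSign (v : ℝ) : ℂ := if 0 < v then 1 / 2 else -(1 / 2)

theorem distNearInt_nonneg (x : ℝ) : 0 ≤ distNearInt x := abs_nonneg _

theorem distNearInt_le_half (x : ℝ) : distNearInt x ≤ 1 / 2 := abs_sub_round x

theorem distNearInt_le_abs_sub (x : ℝ) (n : ℤ) : distNearInt x ≤ |x - n| := round_le x n

theorem norm_halfSign_sub_dirichletIntegral_le {τ v : ℝ} (N : ℕ) (hτ : |τ| ≤ 1 / 2)
    (hv : |v| ≤ 1) :
    ‖halfSign v - dirichletIntegral N τ v‖ ≤ 18 / (1 + N * distNearInt v) := by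
  have hv' := abs_le.mp hv
  have hd0 : distNearInt v ≤ |v| := by simpa using distNearInt_le_abs_sub v 0
  rcases lt_or_ge 0 v with hpos | hneg
  · have hd1 := distNearInt_le_abs_sub v 1
    rw [Int.cast_one, abs_sub_comm, abs_of_nonneg (sub_nonneg.mpr hv'.2)] at hd1
    rw [abs_of_pos hpos] at hd0
    rw [halfSign, if_pos hpos]
    exact norm_half_sub_dirichletIntegral_le N hτ (distNearInt_nonneg v) hd0 hd1
  · have hd1 := distNearInt_le_abs_sub v (-1)
    rw [Int.cast_neg, Int.cast_one, sub_neg_eq_add, abs_of_nonneg (by linarith)] at hd1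
    rw [abs_of_nonpos hneg] at hd0
    have h := norm_half_sub_dirichletIntegral_le N (τ := -τ) (by rwa [abs_neg])
      (distNearInt_nonneg v) hd0 (by linarith)
    rw [dirichletIntegral_neg, neg_neg] at h
    rwa [halfSign, if_neg hneg.not_gt, ← norm_neg, neg_sub', neg_neg]

variable {η₁ η₂ τ Z W : ℝ}

theorem FF_eq_eC_mul_halfSign_sub (hη : η₁ ≤ η₂) :
    FF η₁ η₂ τ W = eC (τ * W) * (halfSign (W - η₁ / 2) - halfSign (W - η₂ / 2)) := by
  unfold FF halfSign
  simp only [sub_pos]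
  by_cases h₁ : η₁ / 2 < W <;> by_cases h₂ : η₂ / 2 < W
  · simp [h₁, h₂]
  · norm_num [h₁, h₂]
  · linarith
  · simp [h₁, h₂]

theorem sum_aCoeff_mul_eC (N : ℕ) (η₁ η₂ τ W : ℝ) :
    ∑ n ∈ Finset.Icc (-(N : ℤ)) N, aCoeff η₁ η₂ τ n * eC (n * W) =
      eC (τ * W) *
        (dirichletIntegral N τ (W - η₁ / 2) - dirichletIntegral N τ (W - η₂ / 2)) := by
  rw [dirichletIntegral_sub, ← integral_comp_sub_left, ← integral_const_mul]
  simp only [aCoeff, ← integral_mul_const]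
  rw [← integral_finsetSum fun n _ => Continuous.intervalIntegrable (by fun_prop) _ _]
  refine integral_congr fun z _ => ?_
  simp only [dirichletKernel, Finset.mul_sum, ← eC_add]
  refine Finset.sum_congr rfl fun n _ => ?_
  ring_nf

theorem tsum_abs_le_eq_sum_Icc {M : Type*} [AddCommMonoid M] [TopologicalSpace M] (hZ : 0 ≤ Z)
    (f : ℤ → M) :
    ∑' n : {n : ℤ // (|n| : ℝ) ≤ Z}, f n = ∑ n ∈ Finset.Icc (-(⌊Z⌋₊ : ℤ)) ⌊Z⌋₊, f n := by
  rw [← Finset.tsum_subtype]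
  refine Equiv.tsum_eq (Equiv.subtypeEquivRight fun n => ?_)
    (fun n : {n // n ∈ Finset.Icc (-(⌊Z⌋₊ : ℤ)) ⌊Z⌋₊} => f n)
  rw [Finset.mem_Icc, ← abs_le, ← Int.natCast_natAbs, Nat.cast_le, Nat.le_floor_iff hZ,
    Nat.cast_natAbs, Int.cast_abs]

theorem one_div_one_add_floor_mul_le {d : ℝ} (hZ : 0 ≤ Z) (hd0 : 0 ≤ d) (hd : d ≤ 1) :
    1 / (1 + ⌊Z⌋₊ * d) ≤ 2 / (1 + Z * d) := by
  rw [div_le_div_iff₀ (by positivity) (by positivity)]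
  nlinarith [Nat.lt_floor_add_one Z]

theorem statement8_general (hη : η₁ ≤ η₂) (hτ : |τ| ≤ 1 / 2) (hZ : 0 ≤ Z)
    (hW₁ : |W - η₁ / 2| ≤ 1) (hW₂ : |W - η₂ / 2| ≤ 1) :
    ‖FF η₁ η₂ τ W - ∑' n : {n : ℤ // (|n| : ℝ) ≤ Z}, aCoeff η₁ η₂ τ n * eC ((n : ℝ) * W)‖ ≤
      36 * (1 / (1 + Z * distNearInt (W - η₁ / 2)) + 1 / (1 + Z * distNearInt (W - η₂ / 2))) := by
  rw [tsum_abs_le_eq_sum_Icc hZ fun n => aCoeff η₁ η₂ τ n * eC (n * W), sum_aCoeff_mul_eC,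
    FF_eq_eC_mul_halfSign_sub hη, ← mul_sub, norm_mul, norm_eC, one_mul, sub_sub_sub_comm, mul_add]
  have hjump {v : ℝ} (hv : |v| ≤ 1) :
      ‖halfSign v - dirichletIntegral ⌊Z⌋₊ τ v‖ ≤ 36 * (1 / (1 + Z * distNearInt v)) :=
    calc _ ≤ 18 / (1 + ⌊Z⌋₊ * distNearInt v) := norm_halfSign_sub_dirichletIntegral_le ⌊Z⌋₊ hτ hv
      _ = 18 * (1 / (1 + ⌊Z⌋₊ * distNearInt v)) := by ring
      _ ≤ 18 * (2 / (1 + Z * distNearInt v)) := by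
        gcongr ?_ * ?_
        exact one_div_one_add_floor_mul_le hZ (distNearInt_nonneg v)
          ((distNearInt_le_half v).trans one_half_lt_one.le)
      _ = _ := by ring
  exact (norm_sub_le _ _).trans (add_le_add (hjump hW₁) (hjump hW₂))

theorem one_div_add_one_div_le_TZ (η₁ η₂ W : ℝ) (hZ : 2 ≤ Z) :
    1 / (1 + Z * distNearInt (W - η₁ / 2)) + 1 / (1 + Z * distNearInt (W - η₂ / 2)) ≤
      3 * TZ η₁ η₂ Z W := by
  have hd₁ := distNearInt_nonneg (W - η₁ / 2)
  have hd₂ := distNearInt_nonneg (W - η₂ / 2)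
  unfold TZ
  generalize distNearInt (W - η₁ / 2) = d₁ at *
  generalize distNearInt (W - η₂ / 2) = d₂ at *
  have hle_one {d : ℝ} (hd : 0 ≤ d) : 1 / (1 + Z * d) ≤ 1 :=
    div_le_one_of_le₀ (le_add_of_nonneg_right (by positivity)) (by positivity)
  have hlog : 1 / (1 + Z * d₁) + 1 / (1 + Z * d₂) ≤ 3 * log Z := by
    linarith [hle_one hd₁, hle_one hd₂, log_two_gt_d9, log_le_log two_pos hZ]
  split_ifs with hd
  · exact hlog
  · obtain ⟨hd₁', hd₂'⟩ := not_or.mp hd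
    have hinv {d : ℝ} (hd : 0 ≤ d) (hd' : d ≠ 0) : 1 / (1 + Z * d) ≤ 1 / (Z * d) :=
      one_div_le_one_div_of_le (by positivity) (by linarith)
    have hsum : 0 ≤ 1 / (Z * d₁) + 1 / (Z * d₂) := by positivity
    rw [mul_min_of_nonneg _ _ zero_le_three]
    exact le_min hlog (by linarith [hinv hd₁ hd₁', hinv hd₂ hd₂'])

end PartialSum

/-- (Truncated Fourier expansion of the sector indicator.) -/
theorem statement8 :
    ∃ C : ℝ, 0 < C ∧ ∀ η₁ η₂ τ Z W : ℝ,
      -1 ≤ η₁ → η₁ < η₂ → η₂ ≤ 1 → -(1 / 2) < τ → τ ≤ 1 / 2 → 2 ≤ Z →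
      -(1 / 2) < W → W ≤ 1 / 2 →
      ‖FF η₁ η₂ τ W -
          ∑' n : {n : ℤ // (|n| : ℝ) ≤ Z}, aCoeff η₁ η₂ τ n * eC ((n : ℝ) * W)‖ ≤
        C * TZ η₁ η₂ Z W := by
  refine ⟨108, by norm_num, fun η₁ η₂ τ Z W hη₁ hη hη₂ hτ₁ hτ₂ hZ hW₁ hW₂ => ?_⟩
  have hbound := statement8_general hη.le (abs_le.mpr ⟨hτ₁.le, hτ₂⟩) (zero_le_two.trans hZ)
    (abs_le.mpr ⟨by linarith, by linarith⟩ : |W - η₁ / 2| ≤ 1)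
    (abs_le.mpr ⟨by linarith, by linarith⟩ : |W - η₂ / 2| ≤ 1)
  linarith [one_div_add_one_div_le_TZ η₁ η₂ W hZ]

end
end

section
/- Assume d ≡ 2 or 3 (mod 4) and fix reals −1 ≤ η₁ < η₂ ≤ 1. For every δ > 0 there exists a constant C > 0, depending only on K, η₁, η₂ and δ, such that for all reals x ≥ 2 and Z ≥ 2: ∑_{s ∈ S(−1,1;x)} T_Z(W(s)) ≤ C·x^{1/2+δ}·(log Z + x·log x / Z). -/
open NumberField Ideal

noncomputable section
open scoped Classical

/-- The absolute norm of an element of `𝒪_K`. -/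
def elemNorm (K : Type) [Field K] [NumberField K] (a : 𝓞 K) : ℕ :=
  Ideal.absNorm (Ideal.span {a})

/-- Membership in the sector `S(η₁,η₂)`, where `e = σ₁(ε)`. -/
def InSector (K : Type) [Field K] [NumberField K] (σ₁ σ₂ : K →+* ℝ) (e η₁ η₂ : ℝ)
    (a : 𝓞 K) : Prop :=
  e ^ η₁ * |σ₂ (a : K)| < |σ₁ (a : K)| ∧ |σ₁ (a : K)| ≤ e ^ η₂ * |σ₂ (a : K)| ∧ 0 < σ₁ (a : K)

/-- `W(s) = log|σ₁(s)/σ₂(s)| / (2 log ε)`, with `e = σ₁(ε)`. -/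
def Wfun (K : Type) [Field K] [NumberField K] (σ₁ σ₂ : K →+* ℝ) (e : ℝ) (s : 𝓞 K) : ℝ :=
  Real.log |σ₁ (s : K) / σ₂ (s : K)| / (2 * Real.log e)

/-!
Fix a `ℤ`-basis of `𝒪_K`, so that `σ₁` and `σ₂` become linear forms `P` and `Q` on `ℤ²` with nonzero
determinant `Δ`. On the sector with norm at most `x` both forms are `O(√x)`, so the relevant points
lie in a box of side `O(√x)`. For two points `(a, b)`, `(a', b)` of one row,
`P(a, b) Q(a', b) - P(a', b) Q(a, b) = (a - a') b Δ` while each product is `O(x)`; when the two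
values of `Q` have the same sign and `b ≠ 0`, the mean value bound for the logarithm therefore
separates the values of `W` by `≫ |a - a'| / x`. In such a row the point nearest to a peak of `T_Z`
contributes at most `log Z` and the others a harmonic sum of size `O((x / Z) log x)`. There are
`O(√x)` rows, and the row `b = 0` consists of `O(√x)` points bounded by `log Z` each.
-/

/-- The function `y ↦ B / |y|` truncated at height `A`, with value `A` at the pole `y = 0`
(where division in `ℝ` would give `0`). The case `A = log Z`, `B = 1 / Z` is one peak of `TZ`. -/
def cappedInv (A B y : ℝ) : ℝ :=
  if y = 0 then A else min A (B / |y|)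

lemma cappedInv_nonneg {A B : ℝ} (hA : 0 ≤ A) (hB : 0 ≤ B) (y : ℝ) : 0 ≤ cappedInv A B y := by
  unfold cappedInv
  split_ifs
  · exact hA
  · exact le_min hA (by positivity)

lemma cappedInv_le_cap (A B y : ℝ) : cappedInv A B y ≤ A := by
  unfold cappedInv
  split_ifs
  · exact le_rfl
  · exact min_le_left _ _

lemma cappedInv_le_div {A B y c : ℝ} (hB : 0 ≤ B) (hc : 0 < c) (hcy : c ≤ |y|) :
    cappedInv A B y ≤ B / c := by
  rw [cappedInv, if_neg (abs_pos.mp (hc.trans_le hcy))]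
  exact (min_le_right _ _).trans (by gcongr)

lemma cappedInv_abs (A B y : ℝ) : cappedInv A B |y| = cappedInv A B y := by
  simp [cappedInv]

lemma min_add_le_min_add_min {A u v : ℝ} (hA : 0 ≤ A) (hu : 0 ≤ u) (hv : 0 ≤ v) :
    min A (u + v) ≤ min A u + min A v := by
  rcases le_total A u with hAu | huA
  · rw [min_eq_left hAu]
    exact (min_le_left _ _).trans (le_add_of_nonneg_right (le_min hA hv))
  · rw [min_eq_right huA, ← min_add_add_left]
    exact min_le_min_right _ (le_add_of_nonneg_left hu)

lemma TZ_le_log (η₁ η₂ Z W : ℝ) : TZ η₁ η₂ Z W ≤ Real.log Z := by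
  unfold TZ
  split_ifs
  · exact le_rfl
  · exact min_le_left _ _

lemma TZ_le_cappedInv_add_cappedInv {Z : ℝ} (hZ : 1 ≤ Z) (η₁ η₂ W : ℝ) :
    TZ η₁ η₂ Z W ≤ cappedInv (Real.log Z) (1 / Z) (distNearInt (W - η₁ / 2)) +
      cappedInv (Real.log Z) (1 / Z) (distNearInt (W - η₂ / 2)) := by
  have hlog : 0 ≤ Real.log Z := Real.log_nonneg hZ
  have hinv : 0 ≤ 1 / Z := by positivity
  unfold TZ
  split_ifs with h
  · have hpole : cappedInv (Real.log Z) (1 / Z) 0 = Real.log Z := if_pos rfl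
    rcases h with h | h <;> rw [h, hpole]
    · exact le_add_of_nonneg_right (cappedInv_nonneg hlog hinv _)
    · exact le_add_of_nonneg_left (cappedInv_nonneg hlog hinv _)
  · rw [not_or] at h
    have hnonneg (X : ℝ) : 0 ≤ distNearInt X := abs_nonneg _
    simp only [cappedInv, if_neg h.1, if_neg h.2, abs_of_nonneg (hnonneg _), div_div]
    have hterm (X : ℝ) : 0 ≤ 1 / (Z * distNearInt X) :=
      one_div_nonneg.mpr (mul_nonneg (by positivity) (hnonneg X))
    exact min_add_le_min_add_min hlog (hterm _) (hterm _)

/-- The nearest integer to `w - θ` lies within distance `1` of the nearest integer to `-θ`. -/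
lemma cappedInv_distNearInt_le_sum {A B w : ℝ} (hA : 0 ≤ A) (hB : 0 ≤ B) (hw : |w| ≤ 1 / 2)
    (θ : ℝ) :
    cappedInv A B (distNearInt (w - θ)) ≤
      ∑ k ∈ Finset.Icc (round (-θ) - 1) (round (-θ) + 1), cappedInv A B (w - (θ + k)) := by
  have hmem : round (w - θ) ∈ Finset.Icc (round (-θ) - 1) (round (-θ) + 1) := by
    have hw' := abs_le.mp hw
    have h₁ := abs_le.mp (abs_sub_round (w - θ))
    have h₂ := abs_le.mp (abs_sub_round (-θ))
    have hlt : round (w - θ) < round (-θ) + 2 := by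
      rify
      linarith
    have hgt : round (-θ) - 2 < round (w - θ) := by
      rify
      linarith
    rw [Finset.mem_Icc]
    omega
  rw [distNearInt, cappedInv_abs, sub_sub]
  exact Finset.single_le_sum (f := fun k : ℤ => cappedInv A B (w - (θ + k)))
    (fun k _ => cappedInv_nonneg hA hB _) hmem

lemma card_le_three_mul_of_abs_le {S : Finset ℤ} {R : ℝ} (hR : 1 ≤ R)
    (hS : ∀ n ∈ S, |(n : ℝ)| ≤ R) : (S.card : ℝ) ≤ 3 * R := by
  have hsub : S ⊆ Finset.Icc (-(⌊R⌋₊ : ℤ)) ⌊R⌋₊ := by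
    intro n hn
    have hfloor : n.natAbs ≤ ⌊R⌋₊ := Nat.le_floor (by simpa using hS n hn)
    rw [Finset.mem_Icc]
    omega
  have hcard : S.card ≤ 2 * ⌊R⌋₊ + 1 := by
    refine (Finset.card_le_card hsub).trans_eq ?_
    rw [Int.card_Icc]
    omega
  calc (S.card : ℝ) ≤ 2 * ⌊R⌋₊ + 1 := by exact_mod_cast hcard
    _ ≤ 3 * R := by linarith [Nat.floor_le (zero_le_one.trans hR)]

lemma sum_inv_abs_le_of_abs_le {S : Finset ℤ} {R : ℝ} (hR : 1 ≤ R) (hzero : 0 ∉ S)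
    (hS : ∀ n ∈ S, |(n : ℝ)| ≤ R) :
    ∑ n ∈ S, |(n : ℝ)|⁻¹ ≤ 2 * (1 + Real.log R) := by
  have hcard (k : ℕ) : (S.filter fun n => n.natAbs = k).card ≤ 2 := by
    refine (Finset.card_le_card (t := {(k : ℤ), -(k : ℤ)}) fun n hn => ?_).trans
      Finset.card_le_two
    rw [Finset.mem_insert, Finset.mem_singleton, ← Int.natAbs_eq_iff]
    exact (Finset.mem_filter.mp hn).2
  have himage : S.image Int.natAbs ⊆ Finset.Icc 1 ⌊R⌋₊ := by
    refine Finset.image_subset_iff.mpr fun n hn => Finset.mem_Icc.mpr ⟨?_, Nat.le_floor ?_⟩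
    · exact Int.natAbs_pos.mpr (ne_of_mem_of_not_mem hn hzero)
    · simpa using hS n hn
  calc ∑ n ∈ S, |(n : ℝ)|⁻¹ = ∑ n ∈ S, (n.natAbs : ℝ)⁻¹ := by simp
    _ = ∑ k ∈ S.image Int.natAbs, (S.filter fun n => n.natAbs = k).card • (k : ℝ)⁻¹ :=
        Finset.sum_comp (fun k : ℕ => (k : ℝ)⁻¹) Int.natAbs
    _ ≤ ∑ k ∈ S.image Int.natAbs, 2 * (k : ℝ)⁻¹ := by
        refine Finset.sum_le_sum fun k _ => ?_
        rw [nsmul_eq_mul]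
        gcongr
        exact_mod_cast hcard k
    _ ≤ ∑ k ∈ Finset.Icc 1 ⌊R⌋₊, 2 * (k : ℝ)⁻¹ :=
        Finset.sum_le_sum_of_subset_of_nonneg himage fun k _ _ => by positivity
    _ = 2 * (harmonic ⌊R⌋₊ : ℝ) := by
        rw [← Finset.mul_sum, harmonic_eq_sum_Icc]
        push_cast
        rfl
    _ ≤ 2 * (1 + Real.log R) := by
        gcongr
        exact harmonic_floor_le_one_add_log R hR

section Spacing

variable {S : Finset ℤ} {w : ℤ → ℝ} {h R : ℝ}

lemma sum_cappedInv_sub_le_of_spaced {A B : ℝ} (hA : 0 ≤ A) (hB : 0 ≤ B) (hh : 0 < h) (hR : 1 ≤ R)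
    (hspaced : ∀ m ∈ S, ∀ n ∈ S, h * |(m : ℝ) - n| ≤ |w m - w n|)
    (hdiam : ∀ m ∈ S, ∀ n ∈ S, |(m : ℝ) - n| ≤ R) (t : ℝ) :
    ∑ n ∈ S, cappedInv A B (w n - t) ≤ A + 4 * B / h * (1 + Real.log R) := by
  have hlogR : 0 ≤ Real.log R := Real.log_nonneg hR
  rcases S.eq_empty_or_nonempty with rfl | hne
  · rw [Finset.sum_empty]
    positivity
  obtain ⟨n₀, hn₀, hnearest⟩ := S.exists_min_image (fun n => |w n - t|) hne
  have hfar : ∀ n ∈ S.erase n₀,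
      cappedInv A B (w n - t) ≤ 2 * B / h * |((n - n₀ : ℤ) : ℝ)|⁻¹ := by
    intro n hn
    obtain ⟨hne, hnS⟩ := Finset.mem_erase.mp hn
    have hpos : 0 < |(n : ℝ) - n₀| := abs_pos.mpr (sub_ne_zero.mpr (by exact_mod_cast hne))
    have htri : |w n - w n₀| ≤ |w n - t| + |w n₀ - t| := by
      rw [abs_sub_comm (w n₀) t]
      exact abs_sub_le _ _ _
    have hhalf : h * |(n : ℝ) - n₀| / 2 ≤ |w n - t| := by
      linarith [hspaced n hnS n₀ hn₀, hnearest n hnS]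
    refine (cappedInv_le_div hB (by positivity) hhalf).trans_eq ?_
    push_cast
    field_simp
  have hharmonic : ∑ n ∈ S.erase n₀, |((n - n₀ : ℤ) : ℝ)|⁻¹ ≤ 2 * (1 + Real.log R) := by
    rw [← Finset.sum_image (f := fun k : ℤ => |(k : ℝ)|⁻¹) (g := fun n => n - n₀)
      (sub_left_injective.injOn)]
    refine sum_inv_abs_le_of_abs_le hR ?_ ?_
    · simp [sub_eq_zero]
    · rw [Finset.forall_mem_image]
      intro n hn
      exact_mod_cast hdiam n (Finset.mem_of_mem_erase hn) n₀ hn₀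
  rw [← Finset.add_sum_erase S _ hn₀]
  refine add_le_add (cappedInv_le_cap _ _ _) ?_
  calc ∑ n ∈ S.erase n₀, cappedInv A B (w n - t)
      ≤ 2 * B / h * ∑ n ∈ S.erase n₀, |((n - n₀ : ℤ) : ℝ)|⁻¹ := by
        rw [Finset.mul_sum]
        exact Finset.sum_le_sum hfar
    _ ≤ 2 * B / h * (2 * (1 + Real.log R)) := by gcongr
    _ = 4 * B / h * (1 + Real.log R) := by ring

variable {p : ℤ → Prop}

lemma sum_cappedInv_sub_le_of_spaced_of_iff {A B : ℝ} (hA : 0 ≤ A) (hB : 0 ≤ B) (hh : 0 < h)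
    (hR : 1 ≤ R)
    (hspaced : ∀ m ∈ S, ∀ n ∈ S, (p m ↔ p n) → h * |(m : ℝ) - n| ≤ |w m - w n|)
    (hdiam : ∀ m ∈ S, ∀ n ∈ S, |(m : ℝ) - n| ≤ R) (t : ℝ) :
    ∑ n ∈ S, cappedInv A B (w n - t) ≤ 2 * (A + 4 * B / h * (1 + Real.log R)) := by
  have hclass (F : Finset ℤ) (hFS : F ⊆ S) (hF : ∀ m ∈ F, ∀ n ∈ F, (p m ↔ p n)) :
      ∑ n ∈ F, cappedInv A B (w n - t) ≤ A + 4 * B / h * (1 + Real.log R) :=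
    sum_cappedInv_sub_le_of_spaced hA hB hh hR
      (fun m hm n hn => hspaced m (hFS hm) n (hFS hn) (hF m hm n hn))
      (fun m hm n hn => hdiam m (hFS hm) n (hFS hn)) t
  rw [← Finset.sum_filter_add_sum_filter_not S p, two_mul]
  refine add_le_add (hclass _ (Finset.filter_subset _ S) fun m hm n hn => ?_)
    (hclass _ (Finset.filter_subset _ S) fun m hm n hn => ?_)
  · exact iff_of_true (Finset.mem_filter.mp hm).2 (Finset.mem_filter.mp hn).2
  · exact iff_of_false (Finset.mem_filter.mp hm).2 (Finset.mem_filter.mp hn).2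

lemma sum_TZ_le_of_spaced_of_iff {Z : ℝ} (hZ : 1 ≤ Z) (hh : 0 < h) (hR : 1 ≤ R)
    (hw : ∀ n ∈ S, |w n| ≤ 1 / 2)
    (hspaced : ∀ m ∈ S, ∀ n ∈ S, (p m ↔ p n) → h * |(m : ℝ) - n| ≤ |w m - w n|)
    (hdiam : ∀ m ∈ S, ∀ n ∈ S, |(m : ℝ) - n| ≤ R) (η₁ η₂ : ℝ) :
    ∑ n ∈ S, TZ η₁ η₂ Z (w n) ≤
      12 * (Real.log Z + 4 * (1 / Z) / h * (1 + Real.log R)) := by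
  set E := Real.log Z + 4 * (1 / Z) / h * (1 + Real.log R)
  have hlog : 0 ≤ Real.log Z := Real.log_nonneg hZ
  have hinv : 0 ≤ 1 / Z := by positivity
  have hpeak (θ : ℝ) :
      ∑ n ∈ S, cappedInv (Real.log Z) (1 / Z) (distNearInt (w n - θ)) ≤ 6 * E := by
    calc ∑ n ∈ S, cappedInv (Real.log Z) (1 / Z) (distNearInt (w n - θ))
        ≤ ∑ n ∈ S, ∑ k ∈ Finset.Icc (round (-θ) - 1) (round (-θ) + 1),
            cappedInv (Real.log Z) (1 / Z) (w n - (θ + k)) :=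
          Finset.sum_le_sum fun n hn => cappedInv_distNearInt_le_sum hlog hinv (hw n hn) θ
      _ = ∑ k ∈ Finset.Icc (round (-θ) - 1) (round (-θ) + 1),
            ∑ n ∈ S, cappedInv (Real.log Z) (1 / Z) (w n - (θ + k)) := Finset.sum_comm
      _ ≤ ∑ _k ∈ Finset.Icc (round (-θ) - 1) (round (-θ) + 1), 2 * E :=
          Finset.sum_le_sum fun k _ =>
            sum_cappedInv_sub_le_of_spaced_of_iff hlog hinv hh hR hspaced hdiam _
      _ = 6 * E := by
          have hcard : (Finset.Icc (round (-θ) - 1) (round (-θ) + 1)).card = 3 := by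
            rw [Int.card_Icc]
            omega
          rw [Finset.sum_const, hcard, nsmul_eq_mul]
          push_cast
          ring
  calc ∑ n ∈ S, TZ η₁ η₂ Z (w n)
      ≤ ∑ n ∈ S, (cappedInv (Real.log Z) (1 / Z) (distNearInt (w n - η₁ / 2)) +
          cappedInv (Real.log Z) (1 / Z) (distNearInt (w n - η₂ / 2))) :=
        Finset.sum_le_sum fun n _ => TZ_le_cappedInv_add_cappedInv hZ η₁ η₂ (w n)
    _ ≤ 12 * E := by
        rw [Finset.sum_add_distrib]
        linarith [hpeak (η₁ / 2), hpeak (η₂ / 2)]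

end Spacing

/-- The number `log |p / q| / (2 log e)`; `Wfun` is its value at the two embeddings. -/
def logRatio (e p q : ℝ) : ℝ :=
  Real.log |p / q| / (2 * Real.log e)

lemma abs_sub_div_le_abs_log_sub_log {u v Y : ℝ} (hu : 0 < u) (hv : 0 < v) (huY : u ≤ Y)
    (hvY : v ≤ Y) : |u - v| / Y ≤ |Real.log u - Real.log v| := by
  wlog hvu : v ≤ u generalizing u v
  · rw [abs_sub_comm, abs_sub_comm (Real.log u)]
    exact this hv hu hvY huY (le_of_not_ge hvu)
  have hlog : Real.log (v / u) ≤ v / u - 1 := Real.log_le_sub_one_of_pos (by positivity)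
  rw [Real.log_div hv.ne' hu.ne'] at hlog
  rw [abs_of_nonneg (sub_nonneg.mpr hvu)]
  calc (u - v) / Y ≤ (u - v) / u := div_le_div_of_nonneg_left (sub_nonneg.mpr hvu) hu huY
    _ = 1 - v / u := by rw [sub_div, div_self hu.ne']
    _ ≤ Real.log u - Real.log v := by linarith
    _ ≤ |Real.log u - Real.log v| := le_abs_self _

lemma abs_cross_div_le_abs_log_sub_log {p q p' q' Y : ℝ} (hp : 0 < p) (hp' : 0 < p')
    (hqq' : 0 < q * q') (hY : p * |q'| ≤ Y) (hY' : p' * |q| ≤ Y) :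
    |p * q' - p' * q| / Y ≤ |(Real.log |p / q| - Real.log |p' / q'|)| := by
  have hq : q ≠ 0 := left_ne_zero_of_mul hqq'.ne'
  have hq' : q' ≠ 0 := right_ne_zero_of_mul hqq'.ne'
  have hcross : |p * q' - p' * q| = |(p * |q'| - p' * |q|)| := by
    rcases pos_and_pos_or_neg_and_neg_of_mul_pos hqq' with ⟨hq, hq'⟩ | ⟨hq, hq'⟩
    · rw [abs_of_pos hq, abs_of_pos hq']
    · rw [abs_of_neg hq, abs_of_neg hq', mul_neg, mul_neg, neg_sub_neg, abs_sub_comm]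
  have hlog : Real.log |p / q| - Real.log |p' / q'| =
      Real.log (p * |q'|) - Real.log (p' * |q|) := by
    rw [Real.log_abs, Real.log_abs, Real.log_div hp.ne' hq, Real.log_div hp'.ne' hq',
      Real.log_mul hp.ne' (abs_ne_zero.mpr hq'), Real.log_mul hp'.ne' (abs_ne_zero.mpr hq),
      Real.log_abs, Real.log_abs]
    ring
  rw [hcross, hlog]
  exact abs_sub_div_le_abs_log_sub_log (by positivity) (by positivity) hY hY'

/-- The part `p |q| ≤ x` of the sector `S(-1,1)` in the plane of the two embeddings, closed at
its lower boundary ray. -/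
structure InTruncatedSector (e x p q : ℝ) : Prop where
  pos : 0 < p
  abs_le_mul : |q| ≤ e * p
  le_mul_abs : p ≤ e * |q|
  mul_abs_le : p * |q| ≤ x

namespace InTruncatedSector

variable {e x p q : ℝ}

lemma right_ne_zero (h : InTruncatedSector e x p q) : q ≠ 0 := by
  rintro rfl
  simpa using h.pos.trans_le h.le_mul_abs

lemma left_le_sqrt (h : InTruncatedSector e x p q) (he : 0 ≤ e) : p ≤ √(e * x) := by
  refine Real.le_sqrt_of_sq_le ?_
  nlinarith [h.pos, h.le_mul_abs, mul_le_mul_of_nonneg_left h.mul_abs_le he]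

lemma abs_right_le_sqrt (h : InTruncatedSector e x p q) (he : 0 ≤ e) : |q| ≤ √(e * x) := by
  refine Real.le_sqrt_of_sq_le ?_
  nlinarith [abs_nonneg q, h.abs_le_mul, mul_le_mul_of_nonneg_left h.mul_abs_le he]

lemma bound_nonneg (h : InTruncatedSector e x p q) : 0 ≤ x :=
  (mul_nonneg h.pos.le (abs_nonneg q)).trans h.mul_abs_le

lemma mul_abs_le_mul {p' q' : ℝ} (h : InTruncatedSector e x p q)
    (h' : InTruncatedSector e x p' q') (he : 0 ≤ e) : p * |q'| ≤ e * x := by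
  rw [← Real.mul_self_sqrt (mul_nonneg he h.bound_nonneg)]
  exact mul_le_mul (h.left_le_sqrt he) (h'.abs_right_le_sqrt he) (abs_nonneg _)
    (Real.sqrt_nonneg _)

lemma abs_logRatio_le (h : InTruncatedSector e x p q) (he : 1 < e) :
    |logRatio e p q| ≤ 1 / 2 := by
  have hloge : 0 < Real.log e := Real.log_pos he
  have he₀ : e ≠ 0 := (zero_lt_one.trans he).ne'
  have hq : 0 < |q| := abs_pos.mpr h.right_ne_zero
  have hupper := Real.log_le_log h.pos h.le_mul_abs
  have hlower := Real.log_le_log hq h.abs_le_mul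
  rw [Real.log_mul he₀ hq.ne', Real.log_abs] at hupper
  rw [Real.log_mul he₀ h.pos.ne', Real.log_abs] at hlower
  have hlog : |Real.log p - Real.log q| ≤ Real.log e := abs_le.mpr ⟨by linarith, by linarith⟩
  rw [logRatio, Real.log_abs, Real.log_div h.pos.ne' h.right_ne_zero, abs_div,
    abs_of_pos (by positivity : 0 < 2 * Real.log e), div_le_iff₀ (by positivity)]
  linarith

lemma abs_cross_div_le_abs_logRatio_sub {p' q' : ℝ} (h : InTruncatedSector e x p q)
    (h' : InTruncatedSector e x p' q') (he : 1 < e) (hqq' : 0 < q * q') :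
    |p * q' - p' * q| / (e * x * (2 * Real.log e)) ≤ |logRatio e p q - logRatio e p' q'| := by
  have he₀ : 0 ≤ e := (zero_lt_one.trans he).le
  have hloge : 0 < 2 * Real.log e := by
    have := Real.log_pos he
    positivity
  rw [logRatio, logRatio, ← sub_div, abs_div, abs_of_pos hloge, ← div_div]
  gcongr
  exact abs_cross_div_le_abs_log_sub_log h.pos h'.pos hqq' (h.mul_abs_le_mul h' he₀)
    (h'.mul_abs_le_mul h he₀)

end InTruncatedSector

/-- The row of height `b` of a finite set of lattice points, as a set of abscissas. -/
def latticeRow (T : Finset (ℤ × ℤ)) (b : ℤ) : Finset ℤ :=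
  T.preimage (fun a => (a, b)) (Prod.mk_left_injective b).injOn

lemma mem_latticeRow {T : Finset (ℤ × ℤ)} {a b : ℤ} : a ∈ latticeRow T b ↔ (a, b) ∈ T :=
  Finset.mem_preimage

lemma sum_eq_sum_latticeRow (T : Finset (ℤ × ℤ)) (f : ℤ × ℤ → ℝ) :
    ∑ m ∈ T, f m = ∑ b ∈ T.image Prod.snd, ∑ a ∈ latticeRow T b, f (a, b) := by
  refine Finset.sum_finset_product_right T _ _ fun m => ?_
  rw [mem_latticeRow]
  exact ⟨fun hm => ⟨Finset.mem_image_of_mem _ hm, hm⟩, And.right⟩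

lemma sum_le_of_latticeRow_le {T : Finset (ℤ × ℤ)} {f : ℤ × ℤ → ℝ} {A D R : ℝ} (hA : 0 ≤ A)
    (hD : 0 ≤ D) (hR : 1 ≤ R) (hfst : ∀ m ∈ T, |(m.1 : ℝ)| ≤ R) (hsnd : ∀ m ∈ T, |(m.2 : ℝ)| ≤ R)
    (hf : ∀ m ∈ T, f m ≤ A)
    (hrow : ∀ b ≠ 0, ∑ a ∈ latticeRow T b, f (a, b) ≤ D) :
    ∑ m ∈ T, f m ≤ 3 * R * (A + D) := by
  have hzero : ∑ a ∈ latticeRow T 0, f (a, 0) ≤ 3 * R * A := by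
    calc ∑ a ∈ latticeRow T 0, f (a, 0) ≤ ∑ _a ∈ latticeRow T 0, A :=
          Finset.sum_le_sum fun a ha => hf _ (mem_latticeRow.mp ha)
      _ = (latticeRow T 0).card * A := by rw [Finset.sum_const, nsmul_eq_mul]
      _ ≤ 3 * R * A := by
          gcongr
          exact card_le_three_mul_of_abs_le hR fun a ha => hfst _ (mem_latticeRow.mp ha)
  have hrow' (b : ℤ) :
      ∑ a ∈ latticeRow T b, f (a, b) ≤ D + if b = 0 then 3 * R * A else 0 := by
    split_ifs with hb
    · subst hb
      linarith
    · simpa using hrow b hb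
  calc ∑ m ∈ T, f m = ∑ b ∈ T.image Prod.snd, ∑ a ∈ latticeRow T b, f (a, b) :=
        sum_eq_sum_latticeRow T f
    _ ≤ ∑ b ∈ T.image Prod.snd, (D + if b = 0 then 3 * R * A else 0) :=
        Finset.sum_le_sum fun b _ => hrow' b
    _ ≤ (T.image Prod.snd).card * D + 3 * R * A := by
        rw [Finset.sum_add_distrib, Finset.sum_const, nsmul_eq_mul, Finset.sum_ite_eq']
        gcongr
        split_ifs
        · exact le_rfl
        · positivity
    _ ≤ 3 * R * D + 3 * R * A := by
        gcongr
        exact card_le_three_mul_of_abs_le hR (Finset.forall_mem_image.mpr hsnd)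
    _ = 3 * R * (A + D) := by ring

lemma one_add_log_mul_sqrt_le {c x : ℝ} (hc : 1 ≤ c) (hx : 2 ≤ x) :
    1 + Real.log (c * √x) ≤ ((1 + Real.log c) / Real.log 2 + 1 / 2) * Real.log x := by
  have hlogc : 0 ≤ Real.log c := Real.log_nonneg hc
  have hlog2 : 0 < Real.log 2 := Real.log_pos one_lt_two
  have hlogx : Real.log 2 ≤ Real.log x := Real.log_le_log two_pos hx
  have hconst : 1 + Real.log c ≤ (1 + Real.log c) / Real.log 2 * Real.log x := by
    rw [div_mul_eq_mul_div, le_div_iff₀ hlog2]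
    gcongr
  rw [Real.log_mul (by positivity) (by positivity), Real.log_sqrt (by positivity)]
  linarith

/-- The determinant of two linear forms on `ℤ²`, that is, the signed covolume of the image of `ℤ²`
under `(P, Q)`. -/
def formDet (P Q : ℤ × ℤ →+ ℝ) : ℝ :=
  P (1, 0) * Q (0, 1) - P (0, 1) * Q (1, 0)

section LinearForms

variable (P Q : ℤ × ℤ →+ ℝ)

lemma form_apply (m : ℤ × ℤ) : P m = m.1 * P (1, 0) + m.2 * P (0, 1) := by
  have hm : m = m.1 • (1, 0) + m.2 • (0, 1) := by simp
  conv_lhs => rw [hm]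
  rw [map_add, map_zsmul, map_zsmul, zsmul_eq_mul, zsmul_eq_mul]

lemma form_mul_sub_mul_eq (m n : ℤ × ℤ) :
    P m * Q n - P n * Q m = (m.1 * n.2 - m.2 * n.1) * formDet P Q := by
  rw [form_apply P m, form_apply P n, form_apply Q m, form_apply Q n, formDet]
  ring

variable {P Q} {e x : ℝ}

lemma exists_abs_coord_le (hdet : formDet P Q ≠ 0) (he : 0 ≤ e) :
    ∃ c : ℝ, 1 ≤ c ∧ ∀ (x : ℝ) (m : ℤ × ℤ), InTruncatedSector e x (P m) (Q m) →
      |(m.1 : ℝ)| ≤ c * √x ∧ |(m.2 : ℝ)| ≤ c * √x := by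
  have hdet' : 0 < |formDet P Q| := abs_pos.mpr hdet
  have hcross (x : ℝ) (m n : ℤ × ℤ) (hm : InTruncatedSector e x (P m) (Q m)) :
      |(m.1 : ℝ) * n.2 - m.2 * n.1| ≤ √e * (|P n| + |Q n|) / |formDet P Q| * √x := by
    have hle : |(m.1 : ℝ) * n.2 - m.2 * n.1| * |formDet P Q| ≤
        √e * √x * (|P n| + |Q n|) := by
      rw [← abs_mul, ← form_mul_sub_mul_eq, ← Real.sqrt_mul he]
      calc |P m * Q n - P n * Q m| ≤ |P m| * |Q n| + |P n| * |Q m| := by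
            rw [← abs_mul, ← abs_mul]
            exact abs_sub _ _
        _ ≤ √(e * x) * |Q n| + |P n| * √(e * x) := by
            rw [abs_of_pos hm.pos]
            gcongr
            · exact hm.left_le_sqrt he
            · exact hm.abs_right_le_sqrt he
        _ = √(e * x) * (|P n| + |Q n|) := by ring
    rw [div_mul_eq_mul_div, le_div_iff₀ hdet']
    linarith
  set c₁ := √e * (|P (0, 1)| + |Q (0, 1)|) / |formDet P Q|
  set c₂ := √e * (|P (1, 0)| + |Q (1, 0)|) / |formDet P Q|
  have hc₁ : 0 ≤ c₁ := by positivity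
  have hc₂ : 0 ≤ c₂ := by positivity
  refine ⟨1 + c₁ + c₂, by linarith, fun x m hm => ⟨?_, ?_⟩⟩
  · calc |(m.1 : ℝ)| ≤ c₁ * √x := by simpa using hcross x m (0, 1) hm
      _ ≤ (1 + c₁ + c₂) * √x := by gcongr; linarith
  · calc |(m.2 : ℝ)| ≤ c₂ * √x := by simpa using hcross x m (1, 0) hm
      _ ≤ (1 + c₁ + c₂) * √x := by gcongr; linarith

lemma logRatio_spaced_on_latticeRow (he : 1 < e) (hx : 0 < x) {b : ℤ} (hb : b ≠ 0) {m n : ℤ}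
    (hm : InTruncatedSector e x (P (m, b)) (Q (m, b)))
    (hn : InTruncatedSector e x (P (n, b)) (Q (n, b)))
    (hsign : 0 < Q (m, b) ↔ 0 < Q (n, b)) :
    |formDet P Q| / (e * x * (2 * Real.log e)) * |(m : ℝ) - n| ≤
      |logRatio e (P (m, b)) (Q (m, b)) - logRatio e (P (n, b)) (Q (n, b))| := by
  have hloge : 0 < Real.log e := Real.log_pos he
  have hQQ : 0 < Q (m, b) * Q (n, b) := by
    rcases hn.right_ne_zero.lt_or_gt with hQn | hQn
    · exact mul_pos_of_neg_of_neg
        (hm.right_ne_zero.lt_of_le (not_lt.mp (hsign.not.mpr hQn.not_gt))) hQn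
    · exact mul_pos (hsign.mpr hQn) hQn
  have hb₁ : (1 : ℝ) ≤ |(b : ℝ)| := by exact_mod_cast Int.one_le_abs hb
  have hcross : |P (m, b) * Q (n, b) - P (n, b) * Q (m, b)| =
      |(b : ℝ)| * (|formDet P Q| * |(m : ℝ) - n|) := by
    rw [form_mul_sub_mul_eq, ← abs_mul, ← abs_mul]
    ring_nf
  refine le_trans ?_ (hm.abs_cross_div_le_abs_logRatio_sub hn he hQQ)
  rw [hcross, div_mul_eq_mul_div]
  gcongr ?_ / _
  exact le_mul_of_one_le_left (by positivity) hb₁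

lemma sum_TZ_logRatio_le {c Z : ℝ} (hdet : formDet P Q ≠ 0) (he : 1 < e) (hx : 1 ≤ x)
    (hZ : 1 ≤ Z) (hc : 1 ≤ c) {T : Finset (ℤ × ℤ)}
    (hT : ∀ m ∈ T, InTruncatedSector e x (P m) (Q m))
    (hcoord : ∀ m ∈ T, |(m.1 : ℝ)| ≤ c * √x ∧ |(m.2 : ℝ)| ≤ c * √x) (η₁ η₂ : ℝ) :
    ∑ m ∈ T, TZ η₁ η₂ Z (logRatio e (P m) (Q m)) ≤
      3 * (c * √x) * (Real.log Z + 12 * (Real.log Z +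
        4 * (1 / Z) / (|formDet P Q| / (e * x * (2 * Real.log e))) *
          (1 + Real.log (2 * c * √x)))) := by
  have hloge : 0 < Real.log e := Real.log_pos he
  have hlogZ : 0 ≤ Real.log Z := Real.log_nonneg hZ
  have hR : 1 ≤ c * √x := one_le_mul_of_one_le_of_one_le hc (Real.one_le_sqrt.mpr hx)
  have h2R : 1 ≤ 2 * c * √x := by linarith
  have hlogR : 0 ≤ Real.log (2 * c * √x) := Real.log_nonneg h2R
  refine sum_le_of_latticeRow_le hlogZ (by positivity) hR (fun m hm => (hcoord m hm).1)
    (fun m hm => (hcoord m hm).2) (fun m _ => TZ_le_log _ _ _ _) fun b hb => ?_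
  refine sum_TZ_le_of_spaced_of_iff (p := fun a => 0 < Q (a, b)) hZ (by positivity) h2R
    (fun a ha => (hT _ (mem_latticeRow.mp ha)).abs_logRatio_le he)
    (fun m hm n hn => logRatio_spaced_on_latticeRow he (by positivity) hb
      (hT _ (mem_latticeRow.mp hm)) (hT _ (mem_latticeRow.mp hn)))
    (fun m hm n hn => (abs_sub _ _).trans ?_) η₁ η₂
  linarith [(hcoord _ (mem_latticeRow.mp hm)).1, (hcoord _ (mem_latticeRow.mp hn)).1]

theorem exists_sum_TZ_logRatio_le (hdet : formDet P Q ≠ 0) (he : 1 < e) :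
    ∃ C : ℝ, 0 < C ∧ ∀ η₁ η₂ x Z : ℝ, 2 ≤ x → 1 ≤ Z → ∀ T : Finset (ℤ × ℤ),
      (∀ m ∈ T, InTruncatedSector e x (P m) (Q m)) →
      ∑ m ∈ T, TZ η₁ η₂ Z (logRatio e (P m) (Q m)) ≤
        C * √x * (Real.log Z + x * Real.log x / Z) := by
  have hloge : 0 < Real.log e := Real.log_pos he
  obtain ⟨c, hc, hcoord⟩ := exists_abs_coord_le hdet (zero_le_one.trans he.le)
  have hlogc : 0 ≤ Real.log (2 * c) := Real.log_nonneg (by linarith)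
  set G := (1 + Real.log (2 * c)) / Real.log 2 + 1 / 2
  set D := 96 * e * Real.log e * G / |formDet P Q|
  have hD : 0 ≤ D := by positivity
  refine ⟨3 * c * (13 + D), by positivity, fun η₁ η₂ x Z hx hZ T hT => ?_⟩
  have hlogZ : 0 ≤ Real.log Z := Real.log_nonneg hZ
  have hlogx : 0 ≤ Real.log x := Real.log_nonneg (by linarith)
  calc ∑ m ∈ T, TZ η₁ η₂ Z (logRatio e (P m) (Q m))
      ≤ 3 * (c * √x) * (Real.log Z + 12 * (Real.log Z +
          4 * (1 / Z) / (|formDet P Q| / (e * x * (2 * Real.log e))) *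
            (1 + Real.log (2 * c * √x)))) :=
        sum_TZ_logRatio_le hdet he (by linarith) hZ hc hT (fun m hm => hcoord x m (hT m hm)) η₁ η₂
    _ ≤ 3 * (c * √x) * (Real.log Z + 12 * (Real.log Z +
          4 * (1 / Z) / (|formDet P Q| / (e * x * (2 * Real.log e))) * (G * Real.log x))) := by
        gcongr
        exact one_add_log_mul_sqrt_le (by linarith) hx
    _ = 3 * c * √x * (13 * Real.log Z + D * (x * Real.log x / Z)) := by
        simp only [D]
        field_simp
        ring
    _ ≤ 3 * c * √x * ((13 + D) * Real.log Z + (13 + D) * (x * Real.log x / Z)) := by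
        gcongr <;> linarith
    _ = 3 * c * (13 + D) * √x * (Real.log Z + x * Real.log x / Z) := by ring

end LinearForms

section QuadraticField

variable {K : Type} [Field K]

/-- The linear form on `ℤ²` induced by a real embedding in coordinates `φ` on `𝓞 K`. -/
def embeddingForm (φ : ℤ × ℤ ≃+ 𝓞 K) (σ : K →+* ℝ) : ℤ × ℤ →+ ℝ :=
  (σ.comp (algebraMap (𝓞 K) K)).toAddMonoidHom.comp φ.toAddMonoidHom

lemma embeddingForm_symm_apply (φ : ℤ × ℤ ≃+ 𝓞 K) (σ : K →+* ℝ) (s : 𝓞 K) :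
    embeddingForm φ σ (φ.symm s) = σ s := by
  simp [embeddingForm]

variable [NumberField K] {σ₁ σ₂ : K →+* ℝ}

lemma formDet_embeddingForm_ne_zero (φ : ℤ × ℤ ≃+ 𝓞 K) (hσ : σ₁ ≠ σ₂) :
    formDet (embeddingForm φ σ₁) (embeddingForm φ σ₂) ≠ 0 := by
  intro hdet
  refine hσ (IsLocalization.ringHom_ext (nonZeroDivisors (𝓞 K)) (RingHom.ext fun s => ?_))
  have hcross := form_mul_sub_mul_eq (embeddingForm φ σ₁) (embeddingForm φ σ₂)
    (φ.symm s) (φ.symm 1)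
  rw [hdet, mul_zero] at hcross
  simpa [embeddingForm_symm_apply, sub_eq_zero] using hcross

lemma norm_eq_mul_of_finrank_eq_two (hdeg : Module.finrank ℚ K = 2) (hσ : σ₁ ≠ σ₂) (z : K) :
    (Algebra.norm ℚ z : ℝ) = σ₁ z * σ₂ z := by
  have hinj : Function.Injective (Complex.ofRealHom.comp : (K →+* ℝ) → (K →+* ℂ)) :=
    fun τ τ' h => RingHom.ext fun y => Complex.ofReal_injective (RingHom.congr_fun h y)
  have huniv : (Finset.univ : Finset (K →+* ℂ)) =
      {Complex.ofRealHom.comp σ₁, Complex.ofRealHom.comp σ₂} := by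
    refine (Finset.eq_of_subset_of_card_le (Finset.subset_univ _) ?_).symm
    rw [Finset.card_pair (hinj.ne hσ), Finset.card_univ, NumberField.Embeddings.card, hdeg]
  have hnorm : algebraMap ℚ ℂ (Algebra.norm ℚ z) = σ₁ z * σ₂ z := by
    rw [Algebra.norm_eq_prod_embeddings,
      ← Fintype.prod_equiv (RingHom.equivRatAlgHom K ℂ) (fun f => f z) (fun φ => φ z)
        fun _ => by simp [RingHom.equivRatAlgHom_apply],
      huniv, Finset.prod_pair (hinj.ne hσ)]
    rfl
  rw [eq_ratCast] at hnorm
  exact_mod_cast hnorm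

lemma elemNorm_eq_abs_mul_abs (hdeg : Module.finrank ℚ K = 2) (hσ : σ₁ ≠ σ₂) (s : 𝓞 K) :
    (elemNorm K s : ℝ) = |σ₁ s| * |σ₂ s| := by
  have hnorm := norm_eq_mul_of_finrank_eq_two hdeg hσ (s : K)
  rw [← Algebra.coe_norm_int s, Rat.cast_intCast] at hnorm
  rw [elemNorm, Ideal.absNorm_span_singleton, Nat.cast_natAbs, Int.cast_abs, hnorm, abs_mul]

lemma InSector.inTruncatedSector (hdeg : Module.finrank ℚ K = 2) (hσ : σ₁ ≠ σ₂) {e x : ℝ}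
    (he : 0 < e) {s : 𝓞 K} (hs : InSector K σ₁ σ₂ e (-1) 1 s) (hsx : (elemNorm K s : ℝ) ≤ x) :
    InTruncatedSector e x (σ₁ s) (σ₂ s) := by
  obtain ⟨hlower, hupper, hpos⟩ := hs
  rw [elemNorm_eq_abs_mul_abs hdeg hσ] at hsx
  rw [Real.rpow_neg_one, inv_mul_lt_iff₀ he] at hlower
  rw [Real.rpow_one] at hupper
  rw [abs_of_pos hpos] at hlower hupper hsx
  exact ⟨hpos, hlower.le, hupper, hsx⟩

/-- Coordinates on `𝓞 K` with respect to an integral basis. -/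
def integralCoordinates (hdeg : Module.finrank ℚ K = 2) : ℤ × ℤ ≃+ 𝓞 K :=
  ((Module.finBasisOfFinrankEq ℤ (𝓞 K)
    ((NumberField.RingOfIntegers.rank K).trans hdeg)).equivFun.trans
      (LinearEquiv.finTwoArrow ℤ ℤ)).symm.toAddEquiv

end QuadraticField

theorem statement17_general
    (K : Type) [Field K] [NumberField K] (hdeg : Module.finrank ℚ K = 2)
    (σ₁ σ₂ : K →+* ℝ) (hσ : σ₁ ≠ σ₂) (e : ℝ) (he : 1 < e) :
    ∃ C : ℝ, 0 < C ∧ ∀ η₁ η₂ x Z : ℝ, 2 ≤ x → 1 ≤ Z →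
      (∑' s : {s : 𝓞 K // InSector K σ₁ σ₂ e (-1) 1 s ∧ (elemNorm K s : ℝ) ≤ x},
        TZ η₁ η₂ Z (Wfun K σ₁ σ₂ e s)) ≤
      C * √x * (Real.log Z + x * Real.log x / Z) := by
  set φ := integralCoordinates hdeg
  obtain ⟨C, hC, hbound⟩ := exists_sum_TZ_logRatio_le (formDet_embeddingForm_ne_zero φ hσ) he
  refine ⟨C, hC, fun η₁ η₂ x Z hx hZ => ?_⟩
  have hlogZ : 0 ≤ Real.log Z := Real.log_nonneg hZ
  have hlogx : 0 ≤ Real.log x := Real.log_nonneg (by linarith)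
  refine tsum_le_of_sum_le' (by positivity) fun T => ?_
  have hT := hbound η₁ η₂ x Z hx hZ
    (T.map ((Function.Embedding.subtype _).trans φ.symm.toEmbedding))
  simp only [Finset.forall_mem_map, Finset.sum_map, Function.Embedding.trans_apply,
    Function.Embedding.subtype_apply, Equiv.coe_toEmbedding, AddEquiv.toEquiv_eq_coe,
    EquivLike.coe_coe, embeddingForm_symm_apply] at hT
  exact hT fun s _ => s.2.1.inTruncatedSector hdeg hσ (zero_lt_one.trans he) s.2.2

/-- (Estimate for `Σ = ∑_{s ∈ S(-1,1;x)} T_Z(W(s))`.) -/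
theorem statement17
    (K : Type) [Field K] [NumberField K]
    (d : ℤ) (hd1 : 1 < d) (hdsf : Squarefree d) (hd4 : d % 4 = 2 ∨ d % 4 = 3)
    (hdeg : Module.finrank ℚ K = 2) (hθ : ∃ θ : K, θ ^ 2 = (d : K))
    (σ₁ σ₂ : K →+* ℝ) (hσ : σ₁ ≠ σ₂)
    (hcl : NumberField.classNumber K = 1)
    (ε : (𝓞 K)ˣ) (hε1 : 1 < σ₁ ((ε : 𝓞 K) : K))
    (hεfund : ∀ u : (𝓞 K)ˣ, ∃ n : ℤ, u = ε ^ n ∨ u = -ε ^ n)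
    (η₁ η₂ : ℝ) (hη₁ : -1 ≤ η₁) (hη₁₂ : η₁ < η₂) (hη₂ : η₂ ≤ 1)
    (δ : ℝ) (hδ : 0 < δ) :
    ∃ C : ℝ, 0 < C ∧ ∀ x Z : ℝ, 2 ≤ x → 2 ≤ Z →
      (∑' s : {s : 𝓞 K // InSector K σ₁ σ₂ (σ₁ ((ε : 𝓞 K) : K)) (-1) 1 s ∧
          (elemNorm K s : ℝ) ≤ x},
        TZ η₁ η₂ Z (Wfun K σ₁ σ₂ (σ₁ ((ε : 𝓞 K) : K)) s)) ≤
      C * x ^ ((1 : ℝ) / 2 + δ) * (Real.log Z + x * Real.log x / Z) := by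
  obtain ⟨C, hC, hbound⟩ := statement17_general K hdeg σ₁ σ₂ hσ _ hε1
  refine ⟨C, hC, fun x Z hx hZ => (hbound η₁ η₂ x Z hx (by linarith)).trans ?_⟩
  have hlogZ : 0 ≤ Real.log Z := Real.log_nonneg (by linarith)
  have hlogx : 0 ≤ Real.log x := Real.log_nonneg (by linarith)
  rw [Real.sqrt_eq_rpow]
  gcongr <;> linarith

end
end
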